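/- arXiv:hep-th/0106194 — 2 statements merged into one kernel-verified Lean document; each statement's English description precedes it below -/
import Mathlib

section
/- Let H be a complex Hilbert space and n a natural number. If W is a finite-dimensional subspace of ℂⁿ ⊗[ℂ] H, then there is a closed subspace V of H of finite codimension (i.e. the quotient H ⧸ V is finite-dimensional over ℂ) such that the image of ℂⁿ ⊗ V in ℂⁿ ⊗ H (under the map induced by the inclusion V → H) intersects W trivially: the intersection of this image with W is the zero subspace. -/
open TensorProduct

/-- The `i`-th coordinate `ℂⁿ ⊗ H → H`. -/
noncomputable def coordT (H : Type*) [AddCommGroup H] [Module ℂ H] (n : ℕ) (i : Fin n) :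
    (Fin n → ℂ) ⊗[ℂ] H →ₗ[ℂ] H :=
  (TensorProduct.lid ℂ H).toLinearMap ∘ₗ LinearMap.rTensor H (LinearMap.proj i)

theorem coordT_tmul (H : Type*) [AddCommGroup H] [Module ℂ H] (n : ℕ) (i : Fin n)
    (a : Fin n → ℂ) (h : H) : coordT H n i (a ⊗ₜ h) = a i • h := by
  simp [coordT]

theorem sum_coordT (H : Type*) [AddCommGroup H] [Module ℂ H] (n : ℕ)
    (x : (Fin n → ℂ) ⊗[ℂ] H) :
    x = ∑ i, (Pi.single i (1 : ℂ) : Fin n → ℂ) ⊗ₜ[ℂ] coordT H n i x := by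
  induction x with
  | zero => simp
  | add x y hx hy =>
    simp only [map_add, TensorProduct.tmul_add, Finset.sum_add_distrib]
    rw [← hx, ← hy]
  | tmul a h =>
    simp only [coordT_tmul, ← TensorProduct.smul_tmul, ← TensorProduct.sum_tmul]
    congr 1
    exact pi_eq_sum_univ' a

/-- For every finite-dimensional subspace `W` of `ℂⁿ ⊗[ℂ] H` there is a closed
finite-codimensional subspace `V` of `H` with `(ℂⁿ ⊗ V) ∩ W = 0`. -/
theorem exists_closed_finite_codim_lTensor_inf_eq_bot
    {H : Type*} [NormedAddCommGroup H] [InnerProductSpace ℂ H] [CompleteSpace H]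
    (n : ℕ) (W : Submodule ℂ ((Fin n → ℂ) ⊗[ℂ] H)) (hW : FiniteDimensional ℂ W) :
    ∃ V : Submodule ℂ H, IsClosed (V : Set H) ∧ FiniteDimensional ℂ (H ⧸ V) ∧
      LinearMap.range (LinearMap.lTensor (Fin n → ℂ) V.subtype) ⊓ W = ⊥ := by
  let K : Submodule ℂ H := ⨆ i, W.map (coordT H n i)
  have hK : FiniteDimensional ℂ K := by
    dsimp only [K]
    infer_instance
  refine ⟨Kᗮ, K.isClosed_orthogonal, ?_, ?_⟩
  · exact (Submodule.quotientEquivOfIsCompl Kᗮ K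
      (Submodule.isCompl_orthogonal K).symm).symm.finiteDimensional
  · rw [eq_bot_iff]
    rintro x ⟨⟨y, rfl⟩, hxW⟩
    rw [Submodule.mem_bot, sum_coordT H n (LinearMap.lTensor _ _ y)]
    refine Finset.sum_eq_zero fun i _ => ?_
    have h1 : coordT H n i (LinearMap.lTensor _ Kᗮ.subtype y) ∈ K :=
      Submodule.mem_iSup_of_mem i (Submodule.mem_map_of_mem hxW)
    have h2 : coordT H n i (LinearMap.lTensor _ Kᗮ.subtype y) ∈ Kᗮ := by
      clear h1 hxW
      induction y with
      | zero => simp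
      | add x y hx hy => simpa only [map_add] using Kᗮ.add_mem hx hy
      | tmul a h =>
        rw [LinearMap.lTensor_tmul, coordT_tmul]
        exact Kᗮ.smul_mem _ h.2
    have h3 := (Submodule.mem_bot ℂ).1 (K.inf_orthogonal_eq_bot ▸ Submodule.mem_inf.2 ⟨h1, h2⟩)
    rw [h3, TensorProduct.tmul_zero]
end

section
/- Let N be a positive natural number and let Δ : ℤ × ℤ →+ ℤ × ℤ be the additive group homomorphism Δ(m, n) = (0, m·N). Then the kernel of Δ is isomorphic as an additive group to ℤ, and the quotient group (ℤ × ℤ) ⧸ (range of Δ) is isomorphic as an additive group to ℤ × ZMod N. -/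
/-- Computation for `S¹ × S²`: with `Δ(m,n) = (0, mN)` and `N > 0`, the kernel of `Δ` is
isomorphic to `ℤ` and the cokernel of `Δ` is isomorphic to `ℤ × ℤ/Nℤ`. -/
theorem ker_equiv_int_and_coker_equiv_int_prod_zmod
    (N : ℕ) (hN : 0 < N)
    (Δ : ℤ × ℤ →+ ℤ × ℤ) (hΔ : ∀ mn : ℤ × ℤ, Δ mn = (0, mn.1 * (N : ℤ))) :
    Nonempty (Δ.ker ≃+ ℤ) ∧ Nonempty ((ℤ × ℤ) ⧸ Δ.range ≃+ ℤ × ZMod N) := by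
  constructor
  · refine ⟨AddEquiv.ofBijective ((AddMonoidHom.snd ℤ ℤ).comp Δ.ker.subtype) ⟨?_, ?_⟩⟩
    · rintro ⟨⟨a, b⟩, h⟩ ⟨⟨c, d⟩, h'⟩ e
      rw [AddMonoidHom.mem_ker, hΔ] at h h'
      simp [hN.ne'] at h h'
      have e' : b = d := e
      simp [h, h', e']
    · intro b
      exact ⟨⟨(0, b), by rw [AddMonoidHom.mem_ker, hΔ]; simp⟩, rfl⟩
  · let f : ℤ × ℤ →+ ℤ × ZMod N := (AddMonoidHom.id ℤ).prodMap (Int.castAddHom (ZMod N))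
    have hf : Function.Surjective f := by
      rintro ⟨a, b⟩
      obtain ⟨c, hc⟩ := ZMod.intCast_surjective b
      exact ⟨(a, c), by simp [f, hc]⟩
    have hk : Δ.range = f.ker := by
      ext ⟨a, b⟩
      rw [AddMonoidHom.mem_range, AddMonoidHom.mem_ker]
      simp only [hΔ, f, AddMonoidHom.prodMap_def, AddMonoidHom.prod_apply,
        AddMonoidHom.comp_apply, AddMonoidHom.coe_fst, AddMonoidHom.coe_snd,
        AddMonoidHom.id_apply, Int.coe_castAddHom, Prod.mk_eq_zero, Prod.mk.injEq,
        ZMod.intCast_zmod_eq_zero_iff_dvd]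
      constructor
      · rintro ⟨x, h1, h2⟩
        exact ⟨h1.symm, ⟨x.1, by rw [← h2, mul_comm]⟩⟩
      · rintro ⟨h1, ⟨c, hc⟩⟩
        exact ⟨(c, 0), h1.symm, by rw [hc, mul_comm]⟩
    exact ⟨(QuotientAddGroup.quotientAddEquivOfEq hk).trans
      (QuotientAddGroup.quotientKerEquivOfSurjective f hf)⟩
end
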